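/- Let C be a class of binary classifiers on a countable domain X with VC dimension d ≥ 2, let n ≥ 1, T ≥ 1, δ ∈ (0,1], let h ∈ C, let μ be a probability distribution on X × {0,1}, and set ε := (16/n)·(dT·ln(2n) + ln(8/δ)). Then with probability at least 1 − δ over (x,y) ∼ μ^n, for every c = (c_1,…,c_T) ∈ C^T it holds that err_μ(h|_{S(h,c)}) ≤ max{ 2·err(h|_{S(h,c)}(x), y), ε }. -/

import Mathlib

/-!
Fix `h` and let `F c` be the set of examples on which `h` errs while agreeing with `c`. On `2n`
points the sets `F c` have at most `(2n)^(dT)` traces, by Sauer–Shelah applied to each coordinate of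
`c`.

For a sample `ω` and an independent ghost sample `ω'` put
`Φ_c = (2/3)^#{i | ω i ∈ F c} * (4/3)^#{i | ω' i ∈ F c}`. Since `2/3 + 4/3 ≤ 2`, averaging `Φ_c`
over the exchanges of the pairs `(ω i, ω' i)` gives at most `1`. These exchanges preserve the joint
law and only finitely many traces occur, so `sup_c Φ_c` has expectation at most `(2n)^(dT)`.
Averaging over the ghost sample alone turns `Φ_c` into
`(2/3)^#{i | ω i ∈ F c} * (1 + μ (F c) / 3)^n`, which is at least `exp (n ε / 16)` when `μ (F c)`
exceeds both `ε` and twice its empirical frequency. Markov's inequality concludes. Unlike the usual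
symmetrization by events, this needs no lower bound on the deviation of the ghost sample.
-/

open MeasureTheory

/-- A finite set `A` is shattered by `C` if every boolean labeling of `A` is
realized by some member of `C`. -/
def Shatters {X : Type*} (C : Set (X → Bool)) (A : Finset X) : Prop :=
  ∀ b : X → Bool, ∃ g ∈ C, ∀ a ∈ A, g a = b a

/-- `C` has VC dimension `d`: some set of size `d` is shattered and no larger set is. -/
def VCDim {X : Type*} (C : Set (X → Bool)) (d : ℕ) : Prop :=
  (∃ A : Finset X, A.card = d ∧ Shatters C A) ∧ ∀ A : Finset X, Shatters C A → A.card ≤ d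

open scoped ENNReal NNReal Finset

section Growth

variable {κ τ W X Y Y' Z : Type*}

/-- The growth function of the family `f` at `m` is at most `K`: the members of `f` have at most `K`
restrictions to any `m` points. The bound is expressed by a finite set of indices that represents
every restriction. -/
def GrowthLE (f : κ → Z → Y) (m K : ℕ) : Prop :=
  ∀ P : Finset Z, #P ≤ m → ∃ S : Finset κ, #S ≤ K ∧ ∀ c, ∃ c' ∈ S, ∀ z ∈ P, f c' z = f c z

theorem GrowthLE.mono_right {f : κ → Z → Y} {m K L : ℕ} (hf : GrowthLE f m K) (hKL : K ≤ L) :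
    GrowthLE f m L := fun P hP ↦
  let ⟨S, hSK, hS⟩ := hf P hP
  ⟨S, hSK.trans hKL, hS⟩

theorem GrowthLE.pi [Fintype τ] {f : κ → Z → Y} {m K : ℕ} (hf : GrowthLE f m K) :
    GrowthLE (fun (c : τ → κ) z j ↦ f (c j) z) m (K ^ Fintype.card τ) := by
  classical
  intro P hP
  obtain ⟨S, hSK, hS⟩ := hf P hP
  refine ⟨Fintype.piFinset fun _ ↦ S, ?_, fun c ↦ ?_⟩
  · simpa using Nat.pow_le_pow_left hSK _
  · choose c' hc'S hc' using fun j ↦ hS (c j)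
    exact ⟨c', Fintype.mem_piFinset.2 hc'S, fun z hz ↦ funext fun j ↦ hc' j z hz⟩

theorem GrowthLE.comp {f : κ → Z → Y} {m K : ℕ} (hf : GrowthLE f m K) (g : W → Z)
    (φ : W → Y → Y') : GrowthLE (fun c w ↦ φ w (f c (g w))) m K := by
  classical
  intro P hP
  obtain ⟨S, hSK, hS⟩ := hf (P.image g) (Finset.card_image_le.trans hP)
  refine ⟨S, hSK, fun c ↦ ?_⟩
  obtain ⟨c', hc'S, hc'⟩ := hS c
  exact ⟨c', hc'S, fun w hw ↦ congrArg (φ w) (hc' (g w) (Finset.mem_image_of_mem g hw))⟩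

/-- The trace of a classifier on a finite set `P`: the points of `P` that it labels `true`. -/
def trace (P : Finset X) (c : X → Bool) : Finset P := {x | c x = true}

theorem trace_eq_trace_iff {P : Finset X} {c c' : X → Bool} :
    trace P c = trace P c' ↔ ∀ x ∈ P, c x = c' x := by
  simp [trace, Finset.ext_iff]

open Classical in
/-- The traces on `P` of the classifiers in `C`, as a set family to which Mathlib's Sauer–Shelah
lemma applies. -/
noncomputable def traces (C : Set (X → Bool)) (P : Finset X) : Finset (Finset P) :=
  {s | ∃ c ∈ C, trace P c = s}

theorem mem_traces {C : Set (X → Bool)} {P : Finset X} {s : Finset P} :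
    s ∈ traces C P ↔ ∃ c ∈ C, trace P c = s := by
  simp [traces]

theorem shatters_map_of_shatters_traces [DecidableEq X] {C : Set (X → Bool)} {P : Finset X}
    {s : Finset P} (hs : (traces C P).Shatters s) : Shatters C (s.map (.subtype (· ∈ P))) := by
  intro b
  obtain ⟨_, ht, hst⟩ := hs (t := s.filter fun x ↦ b x = true) (Finset.filter_subset _ _)
  obtain ⟨c, hc, rfl⟩ := mem_traces.1 ht
  refine ⟨c, hc, fun a ha ↦ ?_⟩
  obtain ⟨x, hx, rfl⟩ := Finset.mem_map.1 ha
  have hiff := Finset.ext_iff.1 hst x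
  simpa [trace, hx, ← Bool.eq_iff_iff] using hiff

theorem card_traces_le {C : Set (X → Bool)} {d : ℕ}
    (hC : ∀ A : Finset X, Shatters C A → #A ≤ d) (P : Finset X) :
    #(traces C P) ≤ ∑ k ∈ Finset.Iic d, (#P).choose k := by
  classical
  have hdim : (traces C P).vcDim ≤ d := Finset.sup_le fun s hs ↦ by
    simpa using hC _ (shatters_map_of_shatters_traces (Finset.mem_shatterer.1 hs))
  calc #(traces C P) ≤ #(traces C P).shatterer := Finset.card_le_card_shatterer _
    _ ≤ ∑ k ∈ Finset.Iic (traces C P).vcDim, (Fintype.card P).choose k :=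
      Finset.card_shatterer_le_sum_vcDim
    _ ≤ ∑ k ∈ Finset.Iic d, (#P).choose k := by
      rw [Fintype.card_coe]
      exact Finset.sum_le_sum_of_subset (Finset.Iic_subset_Iic.2 hdim)

theorem growthLE_of_forall_shatters_card_le {C : Set (X → Bool)} {d : ℕ}
    (hC : ∀ A : Finset X, Shatters C A → #A ≤ d) (m : ℕ) :
    GrowthLE (fun c : C ↦ (c : X → Bool)) m (∑ k ∈ Finset.Iic d, m.choose k) := by
  classical
  intro P hP
  have hrep : ∀ s : traces C P, ∃ c : C, trace P c = s := fun s ↦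
    let ⟨c, hc, hcs⟩ := mem_traces.1 s.2
    ⟨⟨c, hc⟩, hcs⟩
  choose rep hrep using hrep
  refine ⟨Finset.univ.image rep, ?_, fun c ↦ ?_⟩
  · calc #(Finset.univ.image rep) ≤ #(traces C P) := by
          simpa using Finset.card_image_le (s := Finset.univ) (f := rep)
      _ ≤ ∑ k ∈ Finset.Iic d, (#P).choose k := card_traces_le hC P
      _ ≤ ∑ k ∈ Finset.Iic d, m.choose k := by gcongr
  · have hc : trace P c ∈ traces C P := mem_traces.2 ⟨c, c.2, rfl⟩
    exact ⟨rep ⟨_, hc⟩, Finset.mem_image_of_mem _ (Finset.mem_univ _),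
      trace_eq_trace_iff.1 (hrep ⟨_, hc⟩)⟩

end Growth

theorem two_mul_choose_le_pow {m k : ℕ} (hk : 2 ≤ k) : 2 * m.choose k ≤ m ^ k := calc
  2 * m.choose k ≤ k.factorial * m.choose k := by
    gcongr
    exact hk.trans k.self_le_factorial
  _ = m.descFactorial k := (Nat.descFactorial_eq_factorial_mul_choose m k).symm
  _ ≤ m ^ k := Nat.descFactorial_le_pow m k

theorem sum_Iic_choose_le_pow {m d : ℕ} (hm : 2 ≤ m) (hd : 2 ≤ d) :
    ∑ k ∈ Finset.Iic d, m.choose k ≤ m ^ d := by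
  rw [← Nat.range_succ_eq_Iic]
  induction d, hd using Nat.le_induction with
  | base =>
    have hsq : 2 * m.choose 2 = m * (m - 1) := by
      simpa [Nat.descFactorial_succ, mul_comm] using
        (Nat.descFactorial_eq_factorial_mul_choose m 2).symm
    obtain ⟨k, rfl⟩ := Nat.exists_eq_add_of_le' hm
    simp only [Finset.sum_range_succ, Finset.sum_range_zero, Nat.choose_zero_right,
      Nat.choose_one_right, Nat.add_one_sub_one] at hsq ⊢
    nlinarith
  | succ d hd ih =>
    rw [Finset.sum_range_succ]
    have hchoose : 2 * m.choose (d + 1) ≤ m ^ (d + 1) := two_mul_choose_le_pow (by lia)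
    have hpow : 2 * m ^ d ≤ m ^ (d + 1) := by rw [pow_succ']; gcongr
    lia

theorem exp_div_sixteen_le {p : ℝ} (hp0 : 0 ≤ p) (hp1 : p ≤ 1) :
    Real.exp (p / 16) ≤ (2 / 3) ^ (p / 2) * (1 + p / 3) := by
  have hbernoulli : (4 / 3 : ℝ) ^ p ≤ 1 + p / 3 := by
    have := rpow_one_add_le_one_add_mul_self (s := 1 / 3) (by norm_num) hp0 hp1
    norm_num at this ⊢
    linarith
  have hlog : 1 / 8 ≤ Real.log (32 / 27) := by
    have := Real.one_sub_inv_le_log_of_pos (x := 32 / 27) (by norm_num)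
    norm_num at this ⊢
    linarith
  calc Real.exp (p / 16) ≤ Real.exp (Real.log (32 / 27) * (p / 2)) := by
        gcongr
        nlinarith
    _ = (32 / 27) ^ (p / 2) := (Real.rpow_def_of_pos (by norm_num) _).symm
    _ = (2 / 3 * (4 / 3) ^ (2 : ℝ)) ^ (p / 2) := by norm_num
    _ = (2 / 3) ^ (p / 2) * (4 / 3) ^ p := by
        rw [Real.mul_rpow (by norm_num) (by norm_num), ← Real.rpow_mul (by norm_num),
          mul_div_cancel₀ p two_ne_zero]
    _ ≤ (2 / 3) ^ (p / 2) * (1 + p / 3) := by gcongr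

theorem exp_mul_div_sixteen_le {n k : ℕ} {p : ℝ} (hp0 : 0 ≤ p) (hp1 : p ≤ 1)
    (hk : 2 * k ≤ n * p) :
    Real.exp (n * p / 16) ≤ (2 / 3) ^ k * (1 + p / 3) ^ n := calc
  Real.exp (n * p / 16) = Real.exp (p / 16) ^ n := by rw [← Real.exp_nat_mul, mul_div_assoc]
  _ ≤ ((2 / 3) ^ (p / 2) * (1 + p / 3)) ^ n := by
    gcongr
    exact exp_div_sixteen_le hp0 hp1
  _ = (2 / 3) ^ (p / 2 * n) * (1 + p / 3) ^ n := by
    rw [mul_pow, Real.rpow_mul (by norm_num), Real.rpow_natCast]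
  _ ≤ (2 / 3) ^ (k : ℝ) * (1 + p / 3) ^ n := by
    gcongr ?_ * _
    exact Real.rpow_le_rpow_of_exponent_ge (by norm_num) (by norm_num) (by linarith)
  _ = (2 / 3) ^ k * (1 + p / 3) ^ n := by rw [Real.rpow_natCast]

theorem pow_pow_mul_exp_neg_le {N δ x : ℝ} {d T : ℕ} (hN : 0 < N) (hδ : 0 < δ)
    (hx : d * T * Real.log N + Real.log (1 / δ) ≤ x) : (N ^ d) ^ T * Real.exp (-x) ≤ δ := calc
  (N ^ d) ^ T * Real.exp (-x) ≤
      (N ^ d) ^ T * Real.exp (-(d * T * Real.log N + Real.log (1 / δ))) := by gcongr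
  _ = (N ^ d) ^ T * (((N ^ d) ^ T)⁻¹ * δ) := by
    rw [neg_add, Real.exp_add, one_div, Real.log_inv, neg_neg, Real.exp_log hδ, Real.exp_neg,
      ← Nat.cast_mul, Real.exp_nat_mul, Real.exp_log hN, pow_mul]
  _ = δ := mul_inv_cancel_left₀ (by positivity) δ

section Symmetrization

variable {ι κ Z : Type*}

/-- Exchanges the two components of the `i`-th pair of a double sample for every `i` selected by
`s`. -/
def swapAt (s : ι → Bool) (p : ι → Z × Z) : ι → Z × Z :=
  fun i ↦ if s i then (p i).swap else p i

/-- The exponential statistic `a ^ #{i | ω i ∈ F} * b ^ #{i | ω' i ∈ F}` of a double sample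
`p i = (ω i, ω' i)`, written as a product over `i` so that exchanging pairs acts factor by
factor. -/
noncomputable def tilt [Fintype ι] (a b : ℝ≥0) (F : Set Z) (p : ι → Z × Z) : ℝ≥0∞ :=
  ∏ i, F.mulIndicator (fun _ ↦ (a : ℝ≥0∞)) (p i).1 * F.mulIndicator (fun _ ↦ (b : ℝ≥0∞)) (p i).2

variable [Fintype ι]

theorem prod_mulIndicator_const {M : Type*} [CommMonoid M] (F : Set Z) (a : M) (ω : ι → Z) :
    ∏ i, F.mulIndicator (fun _ ↦ a) (ω i) = a ^ {i | ω i ∈ F}.ncard := by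
  classical
  rw [Finset.prod_mulIndicator_eq_prod_filter Finset.univ (fun _ _ ↦ a) (fun _ ↦ F) ω,
    Finset.prod_const, ← Set.ncard_coe_finset]
  simp

theorem tilt_swapAt_congr {F G : Set Z} {p : ι → Z × Z}
    (h : ∀ i, ((p i).1 ∈ F ↔ (p i).1 ∈ G) ∧ ((p i).2 ∈ F ↔ (p i).2 ∈ G)) (a b : ℝ≥0)
    (s : ι → Bool) : tilt a b F (swapAt s p) = tilt a b G (swapAt s p) := by
  classical
  refine Finset.prod_congr rfl fun i _ ↦ ?_
  cases hs : s i <;> simp [swapAt, hs, Set.mulIndicator_apply, h i]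

theorem mulIndicator_mul_add_swap_le {a b : ℝ≥0} (hab : a + b ≤ 2) (F : Set Z) (z z' : Z) :
    F.mulIndicator (fun _ ↦ (a : ℝ≥0∞)) z' * F.mulIndicator (fun _ ↦ (b : ℝ≥0∞)) z +
      F.mulIndicator (fun _ ↦ (a : ℝ≥0∞)) z * F.mulIndicator (fun _ ↦ (b : ℝ≥0∞)) z' ≤ 2 := by
  have hmul : a * b + a * b ≤ 2 := by
    have hsq : 4 * (a * b) ≤ 4 := calc
      4 * (a * b) = 4 * a * b := (mul_assoc ..).symm
      _ ≤ (a + b) ^ 2 := four_mul_le_sq_add a b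
      _ ≤ 2 ^ 2 := by gcongr
      _ = 4 := by norm_num
    have hone : a * b ≤ 1 := by simpa using hsq
    exact (add_le_add hone hone).trans_eq one_add_one_eq_two
  have hmul' : (a * b + a * b : ℝ≥0∞) ≤ 2 := mod_cast hmul
  have hab' : (a + b : ℝ≥0∞) ≤ 2 := mod_cast hab
  by_cases hz : z ∈ F <;> by_cases hz' : z' ∈ F
  · simpa [hz, hz'] using hmul'
  · simpa [hz, hz', add_comm] using hab'
  · simpa [hz, hz'] using hab'
  · simp [hz, hz', one_add_one_eq_two]

theorem sum_tilt_swapAt_le [DecidableEq ι] {a b : ℝ≥0} (hab : a + b ≤ 2) (F : Set Z)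
    (p : ι → Z × Z) :
    ∑ s : ι → Bool, tilt a b F (swapAt s p) ≤ 2 ^ Fintype.card ι := by
  let w (z : Z × Z) : ℝ≥0∞ :=
    F.mulIndicator (fun _ ↦ (a : ℝ≥0∞)) z.1 * F.mulIndicator (fun _ ↦ (b : ℝ≥0∞)) z.2
  calc ∑ s : ι → Bool, tilt a b F (swapAt s p)
      = ∏ i, ∑ t : Bool, w (if t then (p i).swap else p i) :=
        (Fintype.prod_sum fun i (t : Bool) ↦ w (if t then (p i).swap else p i)).symm
    _ ≤ ∏ _i : ι, 2 := Finset.prod_le_prod' fun i _ ↦ by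
        simpa [w] using mulIndicator_mul_add_swap_le hab F (p i).1 (p i).2
    _ = 2 ^ Fintype.card ι := by simp

theorem sum_iSup_tilt_swapAt_le [DecidableEq ι] {F : κ → Set Z} {K : ℕ}
    (hF : GrowthLE (fun c z ↦ z ∈ F c) (2 * Fintype.card ι) K) {a b : ℝ≥0} (hab : a + b ≤ 2)
    (p : ι → Z × Z) :
    ∑ s : ι → Bool, ⨆ c, tilt a b (F c) (swapAt s p) ≤ 2 ^ Fintype.card ι * K := by
  classical
  let P : Finset Z := Finset.univ.image (fun i ↦ (p i).1) ∪ Finset.univ.image (fun i ↦ (p i).2)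
  have hP : #P ≤ 2 * Fintype.card ι := by
    rw [two_mul]
    exact (Finset.card_union_le _ _).trans (add_le_add Finset.card_image_le Finset.card_image_le)
  have hfst (i : ι) : (p i).1 ∈ P := by simp [P]
  have hsnd (i : ι) : (p i).2 ∈ P := by simp [P]
  obtain ⟨S, hSK, hS⟩ := hF P hP
  have hsup (s : ι → Bool) :
      ⨆ c, tilt a b (F c) (swapAt s p) ≤ ∑ c ∈ S, tilt a b (F c) (swapAt s p) := by
    refine iSup_le fun c ↦ ?_
    obtain ⟨c', hc'S, hc'⟩ := hS c
    rw [tilt_swapAt_congr fun i ↦ ⟨(hc' _ (hfst i)).to_iff.symm, (hc' _ (hsnd i)).to_iff.symm⟩]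
    exact Finset.single_le_sum (f := fun c ↦ tilt a b (F c) (swapAt s p)) (fun _ _ ↦ zero_le) hc'S
  calc ∑ s : ι → Bool, ⨆ c, tilt a b (F c) (swapAt s p)
      ≤ ∑ s : ι → Bool, ∑ c ∈ S, tilt a b (F c) (swapAt s p) := Finset.sum_le_sum fun s _ ↦ hsup s
    _ = ∑ c ∈ S, ∑ s : ι → Bool, tilt a b (F c) (swapAt s p) := Finset.sum_comm
    _ ≤ #S • 2 ^ Fintype.card ι :=
      Finset.sum_le_card_nsmul _ _ _ fun c _ ↦ sum_tilt_swapAt_le hab (F c) p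
    _ ≤ 2 ^ Fintype.card ι * K := by
      rw [nsmul_eq_mul, mul_comm]
      gcongr

variable [MeasurableSpace Z]

theorem measurePreserving_swapAt (μ : Measure Z) [SigmaFinite μ] (s : ι → Bool) :
    MeasurePreserving (swapAt s) (Measure.pi fun _ : ι ↦ μ.prod μ)
      (Measure.pi fun _ : ι ↦ μ.prod μ) := by
  refine measurePreserving_pi _ _ (f := fun i (z : Z × Z) ↦ if s i then z.swap else z) fun i ↦ ?_
  cases s i
  · exact MeasurePreserving.id _
  · exact Measure.measurePreserving_swap

theorem lintegral_le_of_sum_swapAt_le [DecidableEq ι] (μ : Measure Z) [IsProbabilityMeasure μ]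
    {G : (ι → Z × Z) → ℝ≥0∞} (hG : Measurable G) {K : ℝ≥0∞}
    (hGK : ∀ p, ∑ s : ι → Bool, G (swapAt s p) ≤ 2 ^ Fintype.card ι * K) :
    ∫⁻ p, G p ∂(Measure.pi fun _ ↦ μ.prod μ) ≤ K := by
  have hsum : 2 ^ Fintype.card ι * ∫⁻ p, G p ∂(Measure.pi fun _ ↦ μ.prod μ) ≤
      2 ^ Fintype.card ι * K := calc
    _ = ∑ s : ι → Bool, ∫⁻ p, G (swapAt s p) ∂(Measure.pi fun _ ↦ μ.prod μ) := by
      simp [(measurePreserving_swapAt μ _).lintegral_comp hG]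
    _ = ∫⁻ p, ∑ s : ι → Bool, G (swapAt s p) ∂(Measure.pi fun _ ↦ μ.prod μ) :=
      (lintegral_finsetSum _ fun s _ ↦
        hG.comp (measurePreserving_swapAt μ s).measurable).symm
    _ ≤ ∫⁻ _, 2 ^ Fintype.card ι * K ∂(Measure.pi fun _ ↦ μ.prod μ) := lintegral_mono hGK
    _ = 2 ^ Fintype.card ι * K := by simp
  exact (ENNReal.mul_le_mul_iff_right (by simp) (by simp)).1 hsum

theorem lintegral_mulIndicator_const (μ : Measure Z) {F : Set Z} (hF : MeasurableSet F)
    (b : ℝ≥0∞) : ∫⁻ z, F.mulIndicator (fun _ ↦ b) z ∂μ = b * μ F + μ Fᶜ := by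
  rw [← lintegral_add_compl _ hF,
    setLIntegral_congr_fun hF (g := fun _ ↦ b) fun z hz ↦ Set.mulIndicator_of_mem hz _,
    setLIntegral_congr_fun hF.compl (g := fun _ ↦ 1) fun z hz ↦ Set.mulIndicator_of_notMem hz _]
  simp

theorem lintegral_pi_prod_eq_pow (μ : Measure Z) [IsProbabilityMeasure μ] {f : Z → ℝ≥0∞}
    (hf : Measurable f) :
    ∫⁻ ω : ι → Z, ∏ i, f (ω i) ∂(Measure.pi fun _ ↦ μ) = (∫⁻ z, f z ∂μ) ^ Fintype.card ι := by
  rw [ProbabilityTheory.lintegral_prod_eq_prod_lintegral_of_indepFun Finset.univ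
    (fun i (ω : ι → Z) ↦ f (ω i)) (ProbabilityTheory.iIndepFun_pi fun _ ↦ hf.aemeasurable)
    fun i ↦ by fun_prop]
  simp [(measurePreserving_eval (fun _ : ι ↦ μ) _).lintegral_comp hf]

theorem lintegral_tilt_ghost (μ : Measure Z) [IsProbabilityMeasure μ] {F : Set Z}
    (hF : MeasurableSet F) (a b : ℝ≥0) (ω : ι → Z) :
    ∫⁻ ω', tilt a b F (fun i ↦ (ω i, ω' i)) ∂(Measure.pi fun _ ↦ μ) =
      a ^ {i | ω i ∈ F}.ncard * (b * μ F + μ Fᶜ) ^ Fintype.card ι := by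
  have hb : Measurable (F.mulIndicator fun _ ↦ (b : ℝ≥0∞)) :=
    measurable_const.piecewise hF measurable_one
  simp only [tilt, Finset.prod_mul_distrib]
  rw [lintegral_const_mul _ (by fun_prop), lintegral_pi_prod_eq_pow μ hb,
    lintegral_mulIndicator_const μ hF, prod_mulIndicator_const]

theorem lintegral_lintegral_pi_pair (μ : Measure Z) [SigmaFinite μ] {G : (ι → Z × Z) → ℝ≥0∞}
    (hG : Measurable G) :
    ∫⁻ ω, ∫⁻ ω', G (fun i ↦ (ω i, ω' i)) ∂(Measure.pi fun _ ↦ μ) ∂(Measure.pi fun _ ↦ μ) =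
      ∫⁻ p, G p ∂(Measure.pi fun _ ↦ μ.prod μ) := by
  have hpair := (measurePreserving_arrowProdEquivProdArrow Z Z ι (fun _ ↦ μ) fun _ ↦ μ).symm
  rw [← hpair.lintegral_comp hG]
  exact (lintegral_prod _ (hG.comp hpair.measurable).aemeasurable).symm

theorem ofReal_exp_le_pow_mul_pow (μ : Measure Z) [IsProbabilityMeasure μ] {F : Set Z}
    (hF : MeasurableSet F) {n k : ℕ} (hk : 2 * k ≤ n * μ.real F) :
    ENNReal.ofReal (Real.exp (n * μ.real F / 16)) ≤
      ((2 / 3 : ℝ≥0) : ℝ≥0∞) ^ k * ((4 / 3 : ℝ≥0) * μ F + μ Fᶜ) ^ n := by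
  have hμ : ((4 / 3 : ℝ≥0) : ℝ≥0∞) * μ F + μ Fᶜ = ENNReal.ofReal (1 + μ.real F / 3) := by
    rw [← ofReal_measureReal (s := F), ← ofReal_measureReal (s := Fᶜ),
      probReal_compl_eq_one_sub hF, ← ENNReal.ofReal_coe_nnreal,
      ← ENNReal.ofReal_mul (by positivity),
      ← ENNReal.ofReal_add (by positivity) (sub_nonneg.2 measureReal_le_one)]
    congr 1
    push_cast
    ring
  rw [hμ, ← ENNReal.ofReal_coe_nnreal, ← ENNReal.ofReal_pow (by positivity),
    ← ENNReal.ofReal_pow (by positivity), ← ENNReal.ofReal_mul (by positivity)]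
  push_cast
  exact ENNReal.ofReal_le_ofReal (exp_mul_div_sixteen_le measureReal_nonneg measureReal_le_one hk)

variable [Countable Z] [MeasurableSingletonClass Z]

theorem mul_measure_exists_le_tilt_ghost_le (μ : Measure Z) [IsProbabilityMeasure μ]
    {F : κ → Set Z} {K : ℕ} (hF : GrowthLE (fun c z ↦ z ∈ F c) (2 * Fintype.card ι) K)
    {a b : ℝ≥0} (hab : a + b ≤ 2) (L : ℝ≥0∞) :
    L * (Measure.pi fun _ : ι ↦ μ) {ω | ∃ c, L ≤
      a ^ {i | ω i ∈ F c}.ncard * (b * μ (F c) + μ (F c)ᶜ) ^ Fintype.card ι} ≤ K := by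
  classical
  let G (p : ι → Z × Z) : ℝ≥0∞ := ⨆ c, tilt a b (F c) p
  have hG : Measurable G := .of_discrete
  calc L * (Measure.pi fun _ : ι ↦ μ) {ω | ∃ c, L ≤ _}
      ≤ L * (Measure.pi fun _ : ι ↦ μ)
          {ω | L ≤ ∫⁻ ω', G (fun i ↦ (ω i, ω' i)) ∂(Measure.pi fun _ ↦ μ)} := by
        gcongr with ω
        rintro ⟨c, hc⟩
        rw [← lintegral_tilt_ghost μ .of_discrete] at hc
        exact hc.trans (lintegral_mono fun ω' ↦ le_iSup (fun c ↦ tilt a b (F c) _) c)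
    _ ≤ ∫⁻ ω, ∫⁻ ω', G (fun i ↦ (ω i, ω' i)) ∂(Measure.pi fun _ ↦ μ) ∂(Measure.pi fun _ ↦ μ) :=
        mul_meas_ge_le_lintegral .of_discrete L
    _ = ∫⁻ p, G p ∂(Measure.pi fun _ ↦ μ.prod μ) := lintegral_lintegral_pi_pair μ hG
    _ ≤ K := lintegral_le_of_sum_swapAt_le μ hG (sum_iSup_tilt_swapAt_le hF hab)

theorem measureReal_exists_lt_le (μ : Measure Z) [IsProbabilityMeasure μ] {F : κ → Set Z} {K : ℕ}
    (hF : GrowthLE (fun c z ↦ z ∈ F c) (2 * Fintype.card ι) K) (ε : ℝ) :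
    (Measure.pi fun _ : ι ↦ μ).real {ω | ∃ c,
      2 * ({i | ω i ∈ F c}.ncard : ℝ) < Fintype.card ι * μ.real (F c) ∧ ε < μ.real (F c)} ≤
      K * Real.exp (-(Fintype.card ι * ε / 16)) := by
  have hab : (2 / 3 + 4 / 3 : ℝ≥0) ≤ 2 := by norm_num
  rw [Real.exp_neg, ← div_eq_mul_inv, le_div_iff₀' (Real.exp_pos _), measureReal_def,
    ← ENNReal.toReal_ofReal (Real.exp_pos _).le, ← ENNReal.toReal_mul]
  refine ENNReal.toReal_le_of_le_ofReal K.cast_nonneg ?_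
  rw [ENNReal.ofReal_natCast]
  refine le_trans ?_ (mul_measure_exists_le_tilt_ghost_le μ hF hab
    (ENNReal.ofReal (Real.exp (Fintype.card ι * ε / 16))))
  gcongr with ω c
  rintro ⟨hk, hε⟩
  refine le_trans ?_ (ofReal_exp_le_pow_mul_pow μ .of_discrete hk.le)
  gcongr

end Symmetrization

/-- The examples `(x, y)` on which `h` errs although it agrees with every `c j`; its measure and its
empirical frequency are the selective errors of `h` on the agreement set of `h` and `c`. -/
def agreementErrors {τ X Y : Type*} (h : X → Y) (c : τ → X → Y) : Set (X × Y) :=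
  {p | h p.1 ≠ p.2 ∧ p.1 ∈ {a : X | ∀ j, c j a = h a}}

theorem GrowthLE.mem_agreementErrors {κ τ X Y : Type*} [Fintype τ] {f : κ → X → Y} {m K : ℕ}
    (hf : GrowthLE f m K) (h : X → Y) :
    GrowthLE (fun (c : τ → κ) p ↦ p ∈ agreementErrors h fun j ↦ f (c j)) m
      (K ^ Fintype.card τ) :=
  hf.pi.comp Prod.fst fun p v ↦ h p.1 ≠ p.2 ∧ ∀ j, v j = h p.1

theorem stmt11_general {X : Type*} [Countable X] [MeasurableSpace X] [MeasurableSingletonClass X]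
    (C : Set (X → Bool)) (d : ℕ) (hd : 2 ≤ d) (hC : ∀ A : Finset X, Shatters C A → #A ≤ d)
    (n T : ℕ) (hn : 1 ≤ n) (δ : ℝ) (hδ0 : 0 < δ) (h : X → Bool)
    (μ : Measure (X × Bool)) [IsProbabilityMeasure μ] (ε : ℝ)
    (hε : 16 / (n : ℝ) * (d * T * Real.log (2 * n) + Real.log (1 / δ)) ≤ ε) :
    1 - δ ≤ ((Measure.pi fun _ : Fin n => μ)
      {ω : Fin n → X × Bool | ∀ c : Fin T → X → Bool, (∀ i, c i ∈ C) →
        (μ {p : X × Bool | h p.1 ≠ p.2 ∧ p.1 ∈ {a : X | ∀ j, c j a = h a}}).toReal ≤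
          max (2 * ((Set.ncard {i : Fin n |
              (ω i).1 ∈ {a : X | ∀ j, c j a = h a} ∧ h (ω i).1 ≠ (ω i).2} : ℝ) / n))
            ε}).toReal := by
  have hn0 : (0 : ℝ) < n := by exact_mod_cast hn
  have hgrowth : GrowthLE (fun (c : Fin T → C) p ↦ p ∈ agreementErrors h fun j ↦ (c j : X → Bool))
      (2 * Fintype.card (Fin n)) (((2 * n) ^ d) ^ T) := by
    simpa using ((growthLE_of_forall_shatters_card_le hC (2 * n)).mono_right
      (sum_Iic_choose_le_pow (by lia) hd)).mem_agreementErrors (τ := Fin T) h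
  let B : Set (Fin n → X × Bool) := {ω | ∃ c : Fin T → C,
    2 * ({i | ω i ∈ agreementErrors h fun j ↦ (c j : X → Bool)}.ncard : ℝ) <
      Fintype.card (Fin n) * μ.real (agreementErrors h fun j ↦ (c j : X → Bool)) ∧
    ε < μ.real (agreementErrors h fun j ↦ (c j : X → Bool))}
  have hB : (Measure.pi fun _ : Fin n ↦ μ).real B ≤ δ := by
    refine (measureReal_exists_lt_le μ hgrowth ε).trans ?_
    push_cast [Fintype.card_fin]
    refine pow_pow_mul_exp_neg_le (by positivity) hδ0 ?_
    rwa [le_div_iff₀' (by norm_num), ← div_le_iff₀' hn0, mul_div_right_comm]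
  calc 1 - δ ≤ 1 - (Measure.pi fun _ : Fin n ↦ μ).real B := by gcongr
    _ = (Measure.pi fun _ : Fin n ↦ μ).real Bᶜ := (probReal_compl_eq_one_sub .of_discrete).symm
    _ ≤ _ := measureReal_mono ?_
  intro ω hω c hc
  by_contra! hlt
  obtain ⟨hemp, hε⟩ := max_lt_iff.1 hlt
  rw [← mul_div_assoc, div_lt_iff₀' hn0] at hemp
  refine hω ⟨fun j ↦ ⟨c j, hc j⟩, ?_, hε⟩
  simpa [agreementErrors, and_comm, Measure.real] using hemp

/-- for a class `C` of VC dimension `d ≥ 2`, `n ≥ 1`, `T ≥ 1`,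
`δ ∈ (0,1]`, `h ∈ C`, distribution `μ` on `X × {0,1}`, and
`ε = (16/n)(dT·ln(2n) + ln(8/δ))`: with probability at least `1 − δ` over
`(x,y) ∼ μⁿ`, every `c ∈ C^T` satisfies
`err_μ(h|_{S(h,c)}) ≤ max{2·err(h|_{S(h,c)}(x), y), ε}`. -/
theorem stmt11 {X : Type*} [Countable X] [MeasurableSpace X] [MeasurableSingletonClass X]
    (C : Set (X → Bool)) (d : ℕ) (hd : 2 ≤ d) (hC : VCDim C d)
    (n T : ℕ) (hn : 1 ≤ n) (hT : 1 ≤ T)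
    (δ : ℝ) (hδ0 : 0 < δ) (hδ1 : δ ≤ 1)
    (h : X → Bool) (hh : h ∈ C)
    (μ : Measure (X × Bool)) [IsProbabilityMeasure μ] (ε : ℝ)
    (hε : ε = (16 / (n : ℝ)) * ((d : ℝ) * (T : ℝ) * Real.log (2 * n) + Real.log (8 / δ))) :
    1 - δ ≤ ((Measure.pi fun _ : Fin n => μ)
      {ω : Fin n → X × Bool | ∀ c : Fin T → X → Bool, (∀ i, c i ∈ C) →
        (μ {p : X × Bool | h p.1 ≠ p.2 ∧ p.1 ∈ {a : X | ∀ j, c j a = h a}}).toReal ≤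
          max (2 * ((Set.ncard {i : Fin n |
              (ω i).1 ∈ {a : X | ∀ j, c j a = h a} ∧ h (ω i).1 ≠ (ω i).2} : ℝ) / n))
            ε}).toReal :=
  stmt11_general C d hd hC.2 n T hn δ hδ0 h μ ε <| hε ▸ by gcongr; norm_num
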